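/- Let f : X₁ → X₂ be an (L,A)-quasi-isometry between CAT(0) spaces, let p ∈ X₁, and let ξ, η ∈ ∂_∞X₁. Suppose h(ξ), h(η) ∈ ∂_∞X₂ are points such that the sequences f(γ_{pξ}(i)) and f(γ_{pη}(i)) (i ∈ ℕ) Tits converge to h(ξ) and h(η) respectively. Then sin(d_T(h(ξ), h(η))/1) ≤ 2L²·sin(d_T(ξ,η)/2), provided d_T(h(ξ),h(η)) ≤ π; in particular, if d_T(ξ,η) ≤ μ/L² for a constant μ chosen so that t/λ ≤ sin t ≤ t for 0 < t with sin t ≤ μ, then d_T(h(ξ), h(η)) ≤ λL²·d_T(ξ,η). -/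

import Mathlib

open Metric Set Filter MeasureTheory

noncomputable def compAngle {X : Type*} [MetricSpace X] (p a b : X) : ℝ :=
  Real.arccos ((dist p a ^ 2 + dist p b ^ 2 - dist a b ^ 2) / (2 * dist p a * dist p b))

def IsGeodesicSegment {X : Type*} [MetricSpace X] (f : ℝ → X) (x y : X) : Prop :=
  f 0 = x ∧ f (dist x y) = y ∧
    ∀ s ∈ Set.Icc (0 : ℝ) (dist x y), ∀ t ∈ Set.Icc (0 : ℝ) (dist x y),
      dist (f s) (f t) = |s - t|

def IsGeodesicRay {X : Type*} [MetricSpace X] (c : ℝ → X) : Prop :=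
  ∀ s ∈ Set.Ici (0 : ℝ), ∀ t ∈ Set.Ici (0 : ℝ), dist (c s) (c t) = |s - t|

/-- CAT(0): a complete geodesic space satisfying the CN (Bruhat–Tits) comparison
inequality for midpoints, which is equivalent to the triangle comparison property. -/
def IsCAT0 (X : Type*) [MetricSpace X] : Prop :=
  (∀ x y : X, ∃ f : ℝ → X, IsGeodesicSegment f x y) ∧
  ∀ x y z m : X, dist y m = dist y z / 2 → dist z m = dist y z / 2 →
    dist x m ^ 2 ≤ dist x y ^ 2 / 2 + dist x z ^ 2 / 2 - dist y z ^ 2 / 4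

/-- `a` lies on the (unique, in a CAT(0) space) geodesic segment from `p` to `x`. -/
def MetricBetween {X : Type*} [MetricSpace X] (p a x : X) : Prop :=
  dist p a + dist a x = dist p x

/-- The Alexandrov angle at `p` between the segments `px` and `py`; in a CAT(0) space
the comparison angles are monotone, so the limit equals the infimum. -/
noncomputable def alexAngle {X : Type*} [MetricSpace X] (p x y : X) : ℝ :=
  sInf {θ : ℝ | ∃ a b : X, MetricBetween p a x ∧ MetricBetween p b y ∧
    a ≠ p ∧ b ≠ p ∧ θ = compAngle p a b}

def ConvexSubset {X : Type*} [MetricSpace X] (A : Set X) : Prop :=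
  ∀ x ∈ A, ∀ y ∈ A, ∀ f : ℝ → X, IsGeodesicSegment f x y →
    ∀ t ∈ Set.Icc (0 : ℝ) (dist x y), f t ∈ A

theorem aux_midconvex (h : ℝ → ℝ) (T : ℝ) (hT : 0 ≤ T)
    (hc : ContinuousOn h (Set.Icc 0 T)) (h0 : h 0 ≤ 0) (h1 : h T ≤ 0)
    (hm : ∀ u v, 0 ≤ u → 0 ≤ v → h ((u + v) / 2) ≤ (h u + h v) / 2) :
    ∀ s ∈ Set.Icc 0 T, h s ≤ 0 := by
  obtain ⟨x, hx, hmax⟩ := isCompact_Icc.exists_isMaxOn (Set.nonempty_Icc.2 hT) hc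
  have hmax' : ∀ y ∈ Set.Icc 0 T, h y ≤ h x := fun y hy => hmax hy
  intro s hs
  refine (hmax' s hs).trans ?_
  obtain ⟨hx0, hxT⟩ := hx
  rcases le_total x (T / 2) with hh | hh
  · have a := hm 0 (2 * x) le_rfl (by linarith)
    have b := hmax' (2 * x) ⟨by linarith, by linarith⟩
    rw [show (0 + 2 * x) / 2 = x by ring] at a
    linarith
  · have a := hm (2 * x - T) T (by linarith) hT
    have b := hmax' (2 * x - T) ⟨by linarith, by linarith⟩
    rw [show (2 * x - T + T) / 2 = x by ring] at a
    linarith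

theorem aux_ray_cont {X : Type*} [MetricSpace X] {c : ℝ → X} (hc : IsGeodesicRay c) :
    ContinuousOn c (Set.Ici 0) := by
  have : LipschitzOnWith 1 c (Set.Ici 0) := by
    apply LipschitzOnWith.of_dist_le_mul
    intro s hs t ht
    rw [hc s hs t ht, Real.dist_eq]
    simp
  exact this.continuousOn

theorem aux_cn {X : Type*} [MetricSpace X] (hX : IsCAT0 X) {c : ℝ → X} (hc : IsGeodesicRay c)
    (x : X) (s t : ℝ) (hs : 0 ≤ s) (hst : s ≤ t) (ht : 0 < t) :
    t * dist x (c s) ^ 2 ≤ (t - s) * dist x (c 0) ^ 2 + s * dist x (c t) ^ 2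
      - s * (t - s) * t := by
  set P := dist x (c 0) ^ 2 with hP
  set Q := dist x (c t) ^ 2 with hQ
  have key := aux_midconvex
    (fun u => t * (dist x (c u) ^ 2 - u ^ 2) - ((t - u) * P + u * (Q - t ^ 2))) t ht.le
    (by
      have h1 : ContinuousOn c (Set.Icc 0 t) := (aux_ray_cont hc).mono (fun u hu => hu.1)
      fun_prop)
    (by simp [hP]) (by simp [hQ])
    (by
      intro u v hu hv
      have hm : (0:ℝ) ≤ (u + v) / 2 := by linarith
      have e1 : dist (c u) (c ((u + v) / 2)) = dist (c u) (c v) / 2 := by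
        rw [hc u hu _ hm, hc u hu v hv, show u - (u + v) / 2 = (u - v) / 2 by ring, abs_div]
        norm_num
      have e2 : dist (c v) (c ((u + v) / 2)) = dist (c u) (c v) / 2 := by
        rw [hc v hv _ hm, hc u hu v hv, show v - (u + v) / 2 = -((u - v) / 2) by ring, abs_neg,
          abs_div]
        norm_num
      have h := hX.2 x (c u) (c v) (c ((u + v) / 2)) e1 e2
      rw [hc u hu v hv, sq_abs] at h
      have h' := mul_le_mul_of_nonneg_left h ht.le
      nlinarith) s ⟨hs, hst⟩
  nlinarith

theorem aux_mono {X : Type*} [MetricSpace X] (hX : IsCAT0 X) {c : ℝ → X} (hc : IsGeodesicRay c)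
    (x : X) (s t : ℝ) (hs : 0 ≤ s) (hst : s ≤ t) (hx : dist x (c 0) = s) :
    dist x (c s) ≤ dist x (c t) := by
  rcases hs.eq_or_lt with h0 | h0
  · subst h0
    rw [hx]; exact dist_nonneg
  have h := aux_cn hX hc x s t hs hst (by linarith)
  rw [hx] at h
  have h2 : s * dist x (c s) ^ 2 ≤ s * dist x (c t) ^ 2 := by
    have h3 : 0 ≤ (t - s) * dist x (c s) ^ 2 := mul_nonneg (by linarith) (sq_nonneg _)
    have h4 : 0 ≤ s * (t - s) * (t - s) := mul_nonneg (mul_nonneg hs (by linarith)) (by linarith)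
    nlinarith
  have h3 := le_of_mul_le_mul_left h2 h0
  exact (pow_le_pow_iff_left₀ dist_nonneg dist_nonneg two_ne_zero).1 h3

theorem aux_mono2 {X : Type*} [MetricSpace X] (hX : IsCAT0 X) {c c' : ℝ → X}
    (hc : IsGeodesicRay c) (hc' : IsGeodesicRay c') (h0 : c 0 = c' 0)
    (s t : ℝ) (hs : 0 ≤ s) (ht : 0 ≤ t) :
    dist (c (min s t)) (c' (min s t)) ≤ dist (c s) (c' t) := by
  rcases le_total s t with h | h
  · rw [min_eq_left h]
    apply aux_mono hX hc' (c s) s t hs h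
    rw [← h0, hc s hs 0 Set.self_mem_Ici, sub_zero, abs_of_nonneg hs]
  · rw [min_eq_right h, dist_comm, dist_comm (c s)]
    apply aux_mono hX hc (c' t) t s ht h
    rw [h0, hc' t ht 0 Set.self_mem_Ici, sub_zero, abs_of_nonneg ht]

theorem aux_angle {X : Type*} [MetricSpace X] {c c' : ℝ → X} {q : X} {θ : ℝ}
    (hc : IsGeodesicRay c) (hc' : IsGeodesicRay c') (h0 : c 0 = q) (h0' : c' 0 = q)
    (h : Filter.Tendsto (fun t => compAngle q (c t) (c' t)) Filter.atTop (nhds θ)) :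
    0 ≤ θ ∧ θ ≤ Real.pi ∧
    Filter.Tendsto (fun t => dist (c t) (c' t) / t) Filter.atTop
      (nhds (2 * Real.sin (θ / 2))) := by
  have hθ0 : 0 ≤ θ := ge_of_tendsto' h (fun t => Real.arccos_nonneg _)
  have hθ1 : θ ≤ Real.pi := le_of_tendsto' h (fun t => Real.arccos_le_pi _)
  refine ⟨hθ0, hθ1, ?_⟩
  have h2 : Filter.Tendsto (fun t => Real.sqrt (2 - 2 * Real.cos (compAngle q (c t) (c' t))))
      Filter.atTop (nhds (Real.sqrt (2 - 2 * Real.cos θ))) :=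
    (Real.continuous_sqrt.comp
      (continuous_const.sub (continuous_const.mul Real.continuous_cos))).continuousAt.tendsto.comp h
  have e : Real.sqrt (2 - 2 * Real.cos θ) = 2 * Real.sin (θ / 2) := by
    have hs : 0 ≤ Real.sin (θ / 2) :=
      Real.sin_nonneg_of_nonneg_of_le_pi (by linarith) (by linarith [Real.pi_pos])
    rw [Real.sqrt_eq_iff_mul_self_eq (by linarith [Real.cos_le_one θ]) (by linarith)]
    have h3 : Real.cos θ = 2 * Real.cos (θ / 2) ^ 2 - 1 := by
      rw [← Real.cos_two_mul]; congr 1; ring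
    have := Real.sin_sq_add_cos_sq (θ / 2)
    rw [h3]; nlinarith
  rw [e] at h2
  refine h2.congr' ?_
  filter_upwards [Filter.eventually_gt_atTop 0] with t ht
  have d1 : dist q (c t) = t := by
    rw [← h0, hc 0 Set.self_mem_Ici t ht.le, zero_sub, abs_neg, abs_of_pos ht]
  have d2 : dist q (c' t) = t := by
    rw [← h0', hc' 0 Set.self_mem_Ici t ht.le, zero_sub, abs_neg, abs_of_pos ht]
  have d3 : dist (c t) (c' t) ≤ 2 * t := by
    have := dist_triangle_left (c t) (c' t) q
    linarith
  have d4 : (0:ℝ) ≤ dist (c t) (c' t) := dist_nonneg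
  unfold compAngle
  rw [d1, d2]
  set D := dist (c t) (c' t)
  have e1 : (t ^ 2 + t ^ 2 - D ^ 2) / (2 * t * t) = 1 - (D / t) ^ 2 / 2 := by
    field_simp; ring
  have d5 : D / t ≤ 2 := by rw [div_le_iff₀ ht]; exact d3
  have d6 : 0 ≤ D / t := div_nonneg d4 ht.le
  rw [e1, Real.cos_arccos (by nlinarith) (by nlinarith [sq_nonneg (D / t)]),
    show 2 - 2 * (1 - (D / t) ^ 2 / 2) = (D / t) ^ 2 by ring, Real.sqrt_sq d6]

theorem aux_approx {X : Type*} [MetricSpace X] {c : ℝ → X} {q : X}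
    (hc : IsGeodesicRay c) (h0 : c 0 = q) (x : X) :
    ∃ s : ℝ, 0 ≤ s ∧ dist x (c s) ≤ Metric.infDist x (c '' Set.Ici (0:ℝ)) + 1 ∧
      dist x q - Metric.infDist x (c '' Set.Ici (0:ℝ)) - 1 ≤ s := by
  have hne : (c '' Set.Ici (0:ℝ)).Nonempty := ⟨c 0, 0, Set.self_mem_Ici, rfl⟩
  obtain ⟨y, ⟨s, hs, rfl⟩, hy⟩ := (Metric.infDist_lt_iff hne).1
    (lt_add_one (Metric.infDist x (c '' Set.Ici (0:ℝ))))
  refine ⟨s, hs, hy.le, ?_⟩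
  have d1 : dist (c s) q = s := by
    rw [← h0, hc s hs 0 Set.self_mem_Ici, sub_zero, abs_of_nonneg hs]
  have := dist_triangle x (c s) q
  linarith

theorem aux_small {e r : ℕ → ℝ} {L C : ℝ} (hL : 0 < L) (hr : ∀ i, r i ≤ L * i + C)
    (hr' : ∀ i : ℕ, (i:ℝ) / L - C ≤ r i) (he : ∀ i, 0 ≤ e i)
    (h : Filter.Tendsto (fun i => e i / r i) Filter.atTop (nhds 0)) :
    Filter.Tendsto (fun i : ℕ => e i / (i:ℝ)) Filter.atTop (nhds 0) := by
  have hC : Filter.Tendsto (fun i : ℕ => C / (i:ℝ)) Filter.atTop (nhds 0) :=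
    tendsto_const_div_atTop_nhds_zero_nat C
  have h2 : Filter.Tendsto (fun i : ℕ => e i / r i * (L + C / (i:ℝ))) Filter.atTop (nhds 0) := by
    simpa using h.mul (hC.const_add L)
  have hi : Filter.Tendsto (fun i : ℕ => (i:ℝ)) Filter.atTop Filter.atTop :=
    tendsto_natCast_atTop_atTop
  refine tendsto_of_tendsto_of_tendsto_of_le_of_le' tendsto_const_nhds h2
    (Filter.Eventually.of_forall fun i => div_nonneg (he i) (Nat.cast_nonneg i)) ?_
  filter_upwards [hi.eventually_gt_atTop 0, hi.eventually_gt_atTop (L * C)] with i h1 h3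
  have hrp : 0 < r i := by
    refine lt_of_lt_of_le ?_ (hr' i)
    have : C < i / L := by rw [lt_div_iff₀ hL]; linarith
    linarith
  have h4 : r i / i ≤ L + C / i := by
    rw [div_le_iff₀ h1, add_mul, div_mul_cancel₀ _ h1.ne']
    exact hr i
  calc e i / i = e i / r i * (r i / i) := by field_simp
    _ ≤ _ := mul_le_mul_of_nonneg_left h4 (div_nonneg (he i) hrp.le)

/-- Quantitative estimate for the map Tits-induced on the boundary by an
`(L,A)`-quasi-isometry: with `α = d_T(ξ,η)` and `β = d_T(h(ξ),h(η))` (realised as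
limits of comparison angles along representing rays), one has
`sin β ≤ 2 L² sin (α/2)`; in particular, if `α ≤ μ/L²` where `μ` is chosen so that
`t ≤ λ sin t` whenever `0 < t < π/2` and `sin t ≤ μ`, then `β ≤ λ L² α`. -/
theorem stmt_18 {X₁ X₂ : Type*} [MetricSpace X₁] [MetricSpace X₂]
    [CompleteSpace X₁] [CompleteSpace X₂] (hX₁ : IsCAT0 X₁) (hX₂ : IsCAT0 X₂)
    (L A : ℝ) (hL : 1 ≤ L) (hA : 0 ≤ A) (f : X₁ → X₂)
    (hqi : ∀ x y : X₁, dist x y / L - A ≤ dist (f x) (f y) ∧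
      dist (f x) (f y) ≤ L * dist x y + A)
    (hcobdd : ∀ y : X₂, ∃ x : X₁, dist (f x) y ≤ A)
    (p : X₁) (q : X₂) (γ₁ γ₂ : ℝ → X₁) (c₁ c₂ : ℝ → X₂)
    (hγ₁ : IsGeodesicRay γ₁) (hγ₂ : IsGeodesicRay γ₂)
    (hγ₁0 : γ₁ 0 = p) (hγ₂0 : γ₂ 0 = p)
    (hc₁ : IsGeodesicRay c₁) (hc₂ : IsGeodesicRay c₂)
    (hc₁0 : c₁ 0 = q) (hc₂0 : c₂ 0 = q)
    -- `f(γ_{pξ}(i))` Tits converges to `h(ξ)` (represented by the ray `c₁`):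
    (hconv₁ : Filter.Tendsto
      (fun i : ℕ => Metric.infDist (f (γ₁ i)) (c₁ '' Set.Ici (0:ℝ)) / dist (f (γ₁ i)) q)
      Filter.atTop (nhds 0))
    (hconv₂ : Filter.Tendsto
      (fun i : ℕ => Metric.infDist (f (γ₂ i)) (c₂ '' Set.Ici (0:ℝ)) / dist (f (γ₂ i)) q)
      Filter.atTop (nhds 0))
    (α β : ℝ)
    (hα : Filter.Tendsto (fun t => compAngle p (γ₁ t) (γ₂ t)) Filter.atTop (nhds α))
    (hβ : Filter.Tendsto (fun t => compAngle q (c₁ t) (c₂ t)) Filter.atTop (nhds β)) :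
    (β ≤ Real.pi → Real.sin β ≤ 2 * L ^ 2 * Real.sin (α / 2)) ∧
    (∀ lam μ : ℝ, 1 < lam → 0 < μ →
      (∀ t : ℝ, 0 < t → t < Real.pi / 2 → Real.sin t ≤ μ → t ≤ lam * Real.sin t) →
      α ≤ μ / L ^ 2 → β ≤ lam * L ^ 2 * α) := by
  obtain ⟨hα0, hα1, hαl⟩ := aux_angle hγ₁ hγ₂ hγ₁0 hγ₂0 hα
  obtain ⟨hβ0, hβ1, hβl⟩ := aux_angle hc₁ hc₂ hc₁0 hc₂0 hβ
  have hL0 : 0 < L := by linarith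
  have main : Real.sin (β / 2) ≤ L ^ 2 * Real.sin (α / 2) := by
    set C := A + dist (f p) q with hC
    have hC0 : 0 ≤ C := by positivity
    have hup : ∀ γ : ℝ → X₁, IsGeodesicRay γ → γ 0 = p → ∀ i : ℕ,
        dist (f (γ i)) q ≤ L * i + C ∧ (i:ℝ) / L - C ≤ dist (f (γ i)) q := by
      intro γ hγ hγ0 i
      have hd : dist (γ i) p = i := by
        rw [← hγ0, hγ i (Set.mem_Ici.2 (Nat.cast_nonneg i)) 0 Set.self_mem_Ici, sub_zero,
          abs_of_nonneg (Nat.cast_nonneg i)]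
      have h1 := hqi (γ i) p
      rw [hd] at h1
      have h2 := dist_triangle (f (γ i)) (f p) q
      have h3 := dist_triangle_right (f (γ i)) (f p) q
      constructor <;> linarith [h1.1, h1.2]
    set e₁ : ℕ → ℝ := fun i => Metric.infDist (f (γ₁ i)) (c₁ '' Set.Ici (0:ℝ)) with he₁
    set e₂ : ℕ → ℝ := fun i => Metric.infDist (f (γ₂ i)) (c₂ '' Set.Ici (0:ℝ)) with he₂
    have hs₁ : Filter.Tendsto (fun i : ℕ => e₁ i / (i:ℝ)) Filter.atTop (nhds 0) :=
      aux_small (r := fun i => dist (f (γ₁ i)) q) hL0 (fun i => (hup γ₁ hγ₁ hγ₁0 i).1)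
        (fun i => (hup γ₁ hγ₁ hγ₁0 i).2) (fun i => Metric.infDist_nonneg) hconv₁
    have hs₂ : Filter.Tendsto (fun i : ℕ => e₂ i / (i:ℝ)) Filter.atTop (nhds 0) :=
      aux_small (r := fun i => dist (f (γ₂ i)) q) hL0 (fun i => (hup γ₂ hγ₂ hγ₂0 i).1)
        (fun i => (hup γ₂ hγ₂ hγ₂0 i).2) (fun i => Metric.infDist_nonneg) hconv₂
    choose s hs0 hsd hsl using fun i : ℕ => aux_approx hc₁ hc₁0 (f (γ₁ i))
    choose t ht0 htd htl using fun i : ℕ => aux_approx hc₂ hc₂0 (f (γ₂ i))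
    have hi : Filter.Tendsto (fun i : ℕ => (i:ℝ)) Filter.atTop Filter.atTop :=
      tendsto_natCast_atTop_atTop
    set l : ℕ → ℝ := fun i => 1 / L - (C + 1) / i - e₁ i / i - e₂ i / i with hl
    have hll : Filter.Tendsto l Filter.atTop (nhds (1 / L)) := by
      have := ((tendsto_const_nhds (x := 1 / L)).sub
        (tendsto_const_div_atTop_nhds_zero_nat (C + 1))).sub hs₁ |>.sub hs₂
      simpa [hl] using this
    have hlm : ∀ᶠ i : ℕ in Filter.atTop, i * l i ≤ min (s i) (t i) := by
      filter_upwards [hi.eventually_gt_atTop 0] with i hip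
      have e : i * l i = i / L - (C + 1) - e₁ i - e₂ i := by
        simp only [hl]; field_simp
      have p1 : 0 ≤ e₁ i := Metric.infDist_nonneg
      have p2 : 0 ≤ e₂ i := Metric.infDist_nonneg
      have q1 := (hup γ₁ hγ₁ hγ₁0 i).2
      have q2 := (hup γ₂ hγ₂ hγ₂0 i).2
      have r1 : dist (f (γ₁ i)) q - e₁ i - 1 ≤ s i := hsl i
      have r2 : dist (f (γ₂ i)) q - e₂ i - 1 ≤ t i := htl i
      rw [e]
      apply le_min <;> linarith
    have hmt : Filter.Tendsto (fun i => min (s i) (t i)) Filter.atTop Filter.atTop :=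
      Filter.tendsto_atTop_mono' _ hlm (hi.atTop_mul_pos (by positivity) hll)
    have hD := hβl.comp hmt
    have hleft := hD.mul hll
    have hright : Filter.Tendsto (fun i : ℕ => L * (dist (γ₁ i) (γ₂ i) / i) + (A + 2) / i
        + e₁ i / i + e₂ i / i) Filter.atTop (nhds (L * (2 * Real.sin (α / 2)))) := by
      have := ((((hαl.comp hi).const_mul L).add
        (tendsto_const_div_atTop_nhds_zero_nat (A + 2))).add hs₁).add hs₂
      simpa using this
    have hle := le_of_tendsto_of_tendsto hleft hright (by
      filter_upwards [hi.eventually_gt_atTop 0, hlm, hmt.eventually_gt_atTop 0] with i hip h1 h2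
      have h3 := aux_mono2 hX₂ hc₁ hc₂ (hc₁0.trans hc₂0.symm) (s i) (t i) (hs0 i) (ht0 i)
      have h4 : dist (c₁ (s i)) (c₂ (t i)) ≤ L * dist (γ₁ i) (γ₂ i) + (A + 2) + e₁ i + e₂ i := by
        have a1 := dist_triangle4 (c₁ (s i)) (f (γ₁ i)) (f (γ₂ i)) (c₂ (t i))
        have a2 := (hqi (γ₁ i) (γ₂ i)).2
        have a3 : dist (f (γ₁ i)) (c₁ (s i)) ≤ e₁ i + 1 := hsd i
        have a4 : dist (f (γ₂ i)) (c₂ (t i)) ≤ e₂ i + 1 := htd i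
        rw [dist_comm (c₁ (s i)) (f (γ₁ i))] at a1
        linarith
      simp only [Function.comp]
      set m := min (s i) (t i)
      have h5 : dist (c₁ m) (c₂ m) / m * l i ≤ dist (c₁ m) (c₂ m) / i := by
        rw [le_div_iff₀ hip]
        calc dist (c₁ m) (c₂ m) / m * l i * i = dist (c₁ m) (c₂ m) / m * (i * l i) := by ring
          _ ≤ dist (c₁ m) (c₂ m) / m * m :=
            mul_le_mul_of_nonneg_left h1 (div_nonneg dist_nonneg h2.le)
          _ = _ := by field_simp
      refine h5.trans ?_
      have e : L * (dist (γ₁ i) (γ₂ i) / i) + (A + 2) / i + e₁ i / i + e₂ i / i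
          = (L * dist (γ₁ i) (γ₂ i) + (A + 2) + e₁ i + e₂ i) / i := by ring
      rw [e]
      exact div_le_div_of_nonneg_right (h3.trans h4) hip.le)
    rw [mul_one_div, div_le_iff₀ hL0] at hle
    nlinarith
  have hsb : 0 ≤ Real.sin (β / 2) :=
    Real.sin_nonneg_of_nonneg_of_le_pi (by linarith) (by linarith [Real.pi_pos])
  have hsin : Real.sin β ≤ 2 * Real.sin (β / 2) := by
    have h1 : Real.sin β = 2 * Real.sin (β / 2) * Real.cos (β / 2) := by
      rw [← Real.sin_two_mul]; congr 1; ring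
    rw [h1]
    exact mul_le_of_le_one_right (by linarith) (Real.cos_le_one _)
  refine ⟨fun _ => by linarith, ?_⟩
  intro lam μ hlam hμ hyp hαμ
  have hL2 : 0 < L ^ 2 := by positivity
  have hαμ' : L ^ 2 * α ≤ μ := by
    rw [le_div_iff₀ hL2] at hαμ; linarith
  have hsa : 2 * (L ^ 2 * Real.sin (α / 2)) ≤ L ^ 2 * α := by
    have := mul_le_mul_of_nonneg_left (Real.sin_le (x := α / 2) (by linarith)) hL2.le
    linarith
  rcases hβ0.eq_or_lt with hb | hb
  · rw [← hb]; positivity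
  rcases lt_or_ge β (Real.pi / 2) with hb2 | hb2
  · have h1 := hyp β hb hb2 (by linarith)
    have h2 : lam * Real.sin β ≤ lam * (L ^ 2 * α) :=
      mul_le_mul_of_nonneg_left (by linarith) (by linarith)
    linarith
  · have hj : 2 / Real.pi * (β / 2) ≤ Real.sin (β / 2) :=
      Real.mul_le_sin (by linarith) (by linarith)
    have hj2 : β ≤ Real.pi * Real.sin (β / 2) := by
      have := mul_le_mul_of_nonneg_left hj Real.pi_pos.le
      rw [show Real.pi * (2 / Real.pi * (β / 2)) = β by field_simp] at this
      exact this
    have hhalf : 1 / 2 ≤ Real.sin (β / 2) := by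
      have : Real.pi * (1 / 2) ≤ Real.pi * Real.sin (β / 2) := by linarith
      exact le_of_mul_le_mul_left this Real.pi_pos
    have hμ1 : 1 ≤ μ := by linarith
    have hlp : Real.pi / 2 ≤ lam := by
      apply le_of_forall_lt
      intro u hu
      have hm0 : 0 < max u 1 := by positivity
      have hm1 : max u 1 < Real.pi / 2 := max_lt hu (by linarith [Real.pi_gt_three])
      obtain ⟨w, hw1, hw2⟩ := exists_between hm1
      have h1 := hyp w (hm0.trans hw1) hw2 ((Real.sin_le_one _).trans hμ1)
      have h2 : lam * Real.sin w ≤ lam * 1 :=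
        mul_le_mul_of_nonneg_left (Real.sin_le_one _) (by linarith)
      linarith [le_max_left u 1]
    have h3 : Real.pi * Real.sin (β / 2) ≤ Real.pi * (L ^ 2 * α / 2) :=
      mul_le_mul_of_nonneg_left (by linarith) Real.pi_pos.le
    have h4 : Real.pi / 2 * (L ^ 2 * α) ≤ lam * (L ^ 2 * α) :=
      mul_le_mul_of_nonneg_right hlp (by positivity)
    linarith
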